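/- Let f be a deep linear fully connected network of depth d and width n, and set K_{ab} = ⟨x_a, x_b⟩ / d_0 for inputs x_1, x_2, x_3, x_4 ∈ ℝ^{d_0}. Then there exists a constant K, independent of n, such that | E_θ[f(x_1) f(x_2) f(x_3) f(x_4)] − (K_{12}K_{34} + K_{13}K_{24} + K_{14}K_{23}) | ≤ K / n for all n ≥ 1. -/

import Mathlib

open MeasureTheory ProbabilityTheory

namespace DeepLinearFC

/-- Parameter index type for a deep linear fully connected network of depth `d` and width `n`
on inputs in `ℝ^{d0}`: the readout vector `v` (`Fin n`), the first-layer matrix `W^(1)`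
(`Fin n × Fin d0`), and the higher-layer matrices `W^(2), …, W^(d)`
(`Fin (d-1) × Fin n × Fin n`). -/
abbrev Param (d0 d n : ℕ) : Type :=
  Fin n ⊕ (Fin n × Fin d0) ⊕ (Fin (d - 1) × Fin n × Fin n)

/-- Hidden activations: `hidden d0 d n θ x ℓ` is `W^(ℓ+1) ⋯ W^(2) W^(1) x`. -/
def hidden (d0 d n : ℕ) (θ : Param d0 d n → ℝ) (x : Fin d0 → ℝ) : ℕ → Fin n → ℝ
  | 0 => fun i => ∑ j : Fin d0, θ (.inr (.inl (i, j))) * x j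
  | ℓ + 1 => fun i => ∑ j : Fin n,
      (if h : ℓ < d - 1 then θ (.inr (.inr (⟨ℓ, h⟩, i, j))) else 0) * hidden d0 d n θ x ℓ j

/-- The deep linear fully connected network
`f(x) = n^{-d/2} d0^{-1/2} vᵀ W^(d) ⋯ W^(2) W^(1) x`. -/
noncomputable def net (d0 d n : ℕ) (θ : Param d0 d n → ℝ) (x : Fin d0 → ℝ) : ℝ :=
  (Real.sqrt ((n : ℝ) ^ d * (d0 : ℝ)))⁻¹ *
    ∑ i : Fin n, θ (.inl i) * hidden d0 d n θ x (d - 1) i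

/-- All parameters are i.i.d. standard Gaussians. -/
noncomputable def gaussParam (d0 d n : ℕ) : Measure (Param d0 d n → ℝ) :=
  Measure.pi fun _ => gaussianReal 0 1

/-- The neural tangent kernel `Θ(x,x') = Σ_μ ∂f(x)/∂θ_μ ⬝ ∂f(x')/∂θ_μ`. -/
noncomputable def NTK (d0 d n : ℕ) (θ : Param d0 d n → ℝ) (x x' : Fin d0 → ℝ) : ℝ :=
  ∑ μ : Param d0 d n,
    fderiv ℝ (fun θ' => net d0 d n θ' x) θ (Pi.single μ 1) *
    fderiv ℝ (fun θ' => net d0 d n θ' x') θ (Pi.single μ 1)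

/-- The two-point kernel `K_{ab} = ⟨x_a, x_b⟩ / d0`. -/
noncomputable def Kker (d0 : ℕ) (x x' : Fin d0 → ℝ) : ℝ :=
  (∑ j : Fin d0, x j * x' j) / (d0 : ℝ)

/-! Conditionally on the earlier layers, a layer `u ↦ W u` is a fresh Gaussian matrix, and
Isserlis' theorem for four Gaussian variables gives
`E[⟨W u₀, W u₁⟩ ⟨W u₂, W u₃⟩] = n² ⟨u₀, u₁⟩⟨u₂, u₃⟩ + n (⟨u₀, u₂⟩⟨u₁, u₃⟩ + ⟨u₀, u₃⟩⟨u₁, u₂⟩)`.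
Hence the sum of `⟨·, ·⟩⟨·, ·⟩` over the three pairings of the four activations is an eigenvector
of the layer recursion, with eigenvalue `n² + 2n`. The readout turns the four-point function into
such a sum, so after normalization the four-point function equals
`(1 + 2/n)^d (K₁₂K₃₄ + K₁₃K₂₄ + K₁₄K₂₃)`. -/

open scoped NNReal ENNReal Matrix

/-! ### Random variables with finite moments -/

section Moments

variable {Ω : Type*} {mΩ : MeasurableSpace Ω} {μ : Measure Ω}

/-- A real random variable has finite moments if it lies in `Lᵖ` for every finite `p`. This class
is closed under sums and products, and so makes all the integrability conditions below routine. -/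
def HasFiniteMoments (f : Ω → ℝ) (μ : Measure Ω) : Prop :=
  ∀ p : ℝ≥0∞, p ≠ ∞ → MemLp f p μ

namespace HasFiniteMoments

variable {ι : Type*} {f g : Ω → ℝ} {F : ι → Ω → ℝ}

theorem of_hasGaussianLaw (hf : HasGaussianLaw f μ) : HasFiniteMoments f μ :=
  fun _ hp ↦ hf.memLp hp

theorem integrable (hf : HasFiniteMoments f μ) : Integrable f μ :=
  memLp_one_iff_integrable.1 (hf 1 ENNReal.one_ne_top)

theorem const_mul (hf : HasFiniteMoments f μ) (c : ℝ) : HasFiniteMoments (fun ω ↦ c * f ω) μ :=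
  fun p hp ↦ (hf p hp).const_mul c

theorem mul_const (hf : HasFiniteMoments f μ) (c : ℝ) : HasFiniteMoments (fun ω ↦ f ω * c) μ :=
  fun p hp ↦ (hf p hp).mul_const c

theorem add (hf : HasFiniteMoments f μ) (hg : HasFiniteMoments g μ) :
    HasFiniteMoments (fun ω ↦ f ω + g ω) μ :=
  fun p hp ↦ (hf p hp).add (hg p hp)

theorem mul (hf : HasFiniteMoments f μ) (hg : HasFiniteMoments g μ) :
    HasFiniteMoments (fun ω ↦ f ω * g ω) μ := fun p hp ↦ by
  have holder : ENNReal.HolderTriple (2 * p) (2 * p) p := ⟨by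
    rw [ENNReal.mul_inv (by simp) (by simp), ← add_mul, ENNReal.inv_two_add_inv_two, one_mul]⟩
  have two_mul_ne_top : 2 * p ≠ ∞ := ENNReal.mul_ne_top (by simp) hp
  exact (hg _ two_mul_ne_top).mul' (hf _ two_mul_ne_top)

theorem sum (s : Finset ι) (hF : ∀ i ∈ s, HasFiniteMoments (F i) μ) :
    HasFiniteMoments (fun ω ↦ ∑ i ∈ s, F i ω) μ :=
  fun p hp ↦ memLp_finsetSum s fun i hi ↦ hF i hi p hp

theorem prod [IsFiniteMeasure μ] (s : Finset ι) (hF : ∀ i ∈ s, HasFiniteMoments (F i) μ) :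
    HasFiniteMoments (fun ω ↦ ∏ i ∈ s, F i ω) μ := by
  induction s using Finset.cons_induction with
  | empty => exact fun p _ ↦ by simpa only [Finset.prod_empty] using memLp_const 1
  | cons i s hi ih =>
    simp only [Finset.prod_cons, Finset.forall_mem_cons] at hF ⊢
    exact hF.1.mul (ih hF.2)

theorem pow [IsFiniteMeasure μ] (hf : HasFiniteMoments f μ) (k : ℕ) :
    HasFiniteMoments (fun ω ↦ f ω ^ k) μ := by
  simpa only [Finset.prod_const, Finset.card_range] using prod (Finset.range k) fun _ _ ↦ hf

theorem dotProduct [Fintype ι] {u v : Ω → ι → ℝ} (hu : ∀ i, HasFiniteMoments (u · i) μ)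
    (hv : ∀ i, HasFiniteMoments (v · i) μ) : HasFiniteMoments (fun ω ↦ u ω ⬝ᵥ v ω) μ :=
  sum _ fun i _ ↦ (hu i).mul (hv i)

end HasFiniteMoments

/-- The sum of `K` over the three perfect pairings of `{0, 1, 2, 3}` (the hafnian of a symmetric
`4 × 4` matrix): the four-point function of a centered Gaussian vector with covariance `K`. -/
def pairingSum (K : Fin 4 → Fin 4 → ℝ) : ℝ :=
  K 0 1 * K 2 3 + K 0 2 * K 1 3 + K 0 3 * K 1 2

theorem HasFiniteMoments.pairingSum {K : Ω → Fin 4 → Fin 4 → ℝ}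
    (hK : ∀ a b, HasFiniteMoments (K · a b) μ) : HasFiniteMoments (fun ω ↦ pairingSum (K ω)) μ :=
  (((hK _ _).mul (hK _ _)).add ((hK _ _).mul (hK _ _))).add ((hK _ _).mul (hK _ _))

end Moments

/-! ### Isserlis' theorem for four variables -/

theorem integral_pow_add_two_gaussianReal (v : ℝ≥0) (k : ℕ) :
    ∫ x, x ^ (k + 2) ∂gaussianReal 0 v = (k + 1) * v * ∫ x, x ^ k ∂gaussianReal 0 v := by
  have moment_eq (m : ℕ) :
      ∫ x, x ^ m ∂gaussianReal 0 v = iteratedDeriv m (fun t ↦ Real.exp (v * t ^ 2 / 2)) 0 := by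
    have h := iteratedDeriv_mgf_zero (X := fun x : ℝ ↦ x) (μ := gaussianReal 0 v) (by simp) m
    rw [mgf_fun_id_gaussianReal] at h
    simpa using h.symm
  have deriv_eq : deriv (fun t : ℝ ↦ Real.exp (v * t ^ 2 / 2)) =
      fun t ↦ t * (v * Real.exp (v * t ^ 2 / 2)) := by
    ext t
    rw [(((hasDerivAt_pow 2 t).const_mul (v : ℝ)).div_const 2 |>.exp).deriv]
    ring
  rw [moment_eq, moment_eq, iteratedDeriv_succ', deriv_eq,
    iteratedDeriv_fun_mul (by fun_prop) (by fun_prop)]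
  -- In Leibniz' formula at `0`, only the first derivative of the factor `t` survives.
  simp only [iteratedDeriv_fun_id_zero, iteratedDeriv_const_mul_field]
  rw [Finset.sum_eq_single_of_mem 1 (by simp) (by intro i _ hi; simp [hi])]
  simp only [Nat.choose_one_right, Nat.cast_add, Nat.cast_one, ↓reduceIte, mul_one,
    add_tsub_cancel_right]
  ring

theorem integral_pow_four_gaussianReal (v : ℝ≥0) :
    ∫ x, x ^ 4 ∂gaussianReal 0 v = 3 * (v : ℝ) ^ 2 := by
  have second_moment := integral_pow_add_two_gaussianReal v 0
  have fourth_moment := integral_pow_add_two_gaussianReal v 2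
  norm_num at second_moment fourth_moment
  rw [fourth_moment, second_moment]
  ring

theorem sum_fin_four_arrow {ι M : Type*} [Fintype ι] [AddCommMonoid M] (F : (Fin 4 → ι) → M) :
    ∑ s, F s = ∑ i, ∑ j, ∑ k, ∑ l, F ![i, j, k, l] := by
  have sum_cons {m : ℕ} (G : (Fin (m + 1) → ι) → M) :
      ∑ s, G s = ∑ i, ∑ s, G (Matrix.vecCons i s) := by
    rw [← (Fin.consEquiv fun _ ↦ ι).sum_comp, Fintype.sum_prod_type]
    rfl
  simp only [sum_cons, Fintype.sum_unique]
  rfl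

theorem sum_units_int {M : Type*} [AddCommMonoid M] (F : ℤˣ → M) : ∑ i, F i = F 1 + F (-1) :=
  Finset.sum_pair (by decide)

theorem sum_signs_prod_mul_sum_pow_four (y : Fin 4 → ℝ) :
    ∑ s : Fin 4 → ℤˣ, (∏ a, ((s a : ℤ) : ℝ)) * (∑ a, s a * y a) ^ 4 = 384 * ∏ a, y a := by
  simp only [sum_fin_four_arrow, sum_units_int, Fin.sum_univ_four, Fin.prod_univ_four,
    Matrix.cons_val, Units.val_neg, Units.val_one]
  push_cast
  ring

theorem sum_signs_prod_mul_sum_sum_sq {K : Fin 4 → Fin 4 → ℝ} (hK : ∀ a b, K a b = K b a) :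
    ∑ s : Fin 4 → ℤˣ, (∏ a, ((s a : ℤ) : ℝ)) * (∑ a, ∑ b, s a * (s b * K a b)) ^ 2 =
      128 * pairingSum K := by
  simp only [sum_fin_four_arrow, sum_units_int, Fin.sum_univ_four, Fin.prod_univ_four, pairingSum,
    Matrix.cons_val, Units.val_neg, Units.val_one]
  rw [hK 1 0, hK 2 0, hK 3 0, hK 2 1, hK 3 1, hK 3 2]
  push_cast
  ring

section Isserlis

variable {Ω : Type*} {mΩ : MeasurableSpace Ω} {P : Measure Ω}

theorem integral_pow_four_of_hasGaussianLaw {Y : Ω → ℝ} (hY : HasGaussianLaw Y P)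
    (hY₀ : P[Y] = 0) : P[fun ω ↦ Y ω ^ 4] = 3 * Var[Y; P] ^ 2 := by
  have map_eq := hY.map_eq_gaussianReal
  rw [hY₀] at map_eq
  rw [← integral_map (f := fun x : ℝ ↦ x ^ 4) hY.aemeasurable (by fun_prop), map_eq,
    integral_pow_four_gaussianReal, Real.coe_toNNReal _ (variance_nonneg Y P)]

/-- Polarization: the signed combinations `∑ a, ± X a` are centered Gaussian variables, whose fourth
moments are known. -/
theorem integral_prod_eq_pairingSum_covariance {X : Fin 4 → Ω → ℝ}
    (hX : HasGaussianLaw (fun ω ↦ (X · ω)) P) (hX₀ : ∀ a, P[X a] = 0) :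
    P[fun ω ↦ ∏ a, X a ω] = pairingSum fun a b ↦ cov[X a, X b; P] := by
  have := hX.isProbabilityMeasure
  let Y (s : Fin 4 → ℤˣ) (ω : Ω) : ℝ := ∑ a, s a * X a ω
  have hY s : HasGaussianLaw (Y s) P := by
    let L : (Fin 4 → ℝ) →L[ℝ] ℝ := ∑ a, ((s a : ℤ) : ℝ) • ContinuousLinearMap.proj a
    have Y_eq : Y s = fun ω ↦ L (X · ω) := by ext ω; simp [Y, L]
    exact Y_eq ▸ hX.map_fun L
  have Y_centered s : P[Y s] = 0 := by
    rw [integral_finsetSum _ fun a _ ↦ (hX.eval a).integrable.const_mul _]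
    simp [integral_const_mul, hX₀]
  have variance_Y s : Var[Y s; P] = ∑ a, ∑ b, s a * (s b * cov[X a, X b; P]) := by
    rw [variance_fun_sum fun a ↦ (hX.eval a).memLp_two.const_mul _]
    simp only [covariance_const_mul_left, covariance_const_mul_right, mul_left_comm]
  have integrable_Y_pow s : Integrable (fun ω ↦ (∏ a, ((s a : ℤ) : ℝ)) * Y s ω ^ 4) P :=
    ((HasFiniteMoments.of_hasGaussianLaw (hY s)).pow 4).integrable.const_mul _
  have h : 384 * P[fun ω ↦ ∏ a, X a ω] = 384 * pairingSum fun a b ↦ cov[X a, X b; P] := calc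
    _ = ∑ s : Fin 4 → ℤˣ, (∏ a, ((s a : ℤ) : ℝ)) * P[fun ω ↦ Y s ω ^ 4] := by
      simp_rw [← integral_const_mul, ← sum_signs_prod_mul_sum_pow_four]
      exact integral_finsetSum _ fun s _ ↦ integrable_Y_pow s
    _ = 3 * ∑ s : Fin 4 → ℤˣ, (∏ a, ((s a : ℤ) : ℝ)) *
          (∑ a, ∑ b, s a * (s b * cov[X a, X b; P])) ^ 2 := by
      simp only [integral_pow_four_of_hasGaussianLaw (hY _) (Y_centered _), variance_Y,
        Finset.mul_sum (a := (3 : ℝ)), mul_left_comm (3 : ℝ)]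
    _ = 384 * pairingSum fun a b ↦ cov[X a, X b; P] := by
      rw [sum_signs_prod_mul_sum_sum_sq fun a b ↦ covariance_comm (X a) (X b)]
      ring
  linarith

end Isserlis

/-! ### Gaussian linear layers -/

/-- The law of a family of i.i.d. standard Gaussian variables indexed by `ι`, on `ι → ℝ` rather than
`EuclideanSpace ℝ ι`; `gaussParam` is the instance for the network parameters. -/
noncomputable abbrev stdGaussianPi (ι : Type*) [Fintype ι] : Measure (ι → ℝ) :=
  Measure.pi fun _ ↦ gaussianReal 0 1

section StdGaussianPi

variable {ι κ : Type*} [Fintype ι] [Fintype κ]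

theorem hasLaw_eval_stdGaussianPi (i : ι) :
    HasLaw (fun v ↦ v i) (gaussianReal 0 1) (stdGaussianPi ι) :=
  (measurePreserving_eval (fun _ ↦ gaussianReal 0 1) i).hasLaw

theorem iIndepFun_stdGaussianPi : iIndepFun (fun (i : ι) v ↦ v i) (stdGaussianPi ι) :=
  iIndepFun_pi fun _ ↦ aemeasurable_id

theorem hasGaussianLaw_stdGaussianPi : HasGaussianLaw (fun v : ι → ℝ ↦ v) (stdGaussianPi ι) :=
  iIndepFun_stdGaussianPi.hasGaussianLaw fun i ↦ (hasLaw_eval_stdGaussianPi i).hasGaussianLaw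

theorem hasFiniteMoments_eval_stdGaussianPi (i : ι) :
    HasFiniteMoments (fun v ↦ v i) (stdGaussianPi ι) :=
  .of_hasGaussianLaw (hasGaussianLaw_stdGaussianPi.eval i)

theorem covariance_eval_stdGaussianPi [DecidableEq ι] (i j : ι) :
    cov[fun v ↦ v i, fun v ↦ v j; stdGaussianPi ι] = if i = j then 1 else 0 := by
  have memLp_two (i : ι) : MemLp (fun v ↦ v i) 2 (stdGaussianPi ι) :=
    (hasGaussianLaw_stdGaussianPi.eval i).memLp_two
  split_ifs with hij
  · subst hij
    rw [covariance_self (memLp_two i).aemeasurable, (hasLaw_eval_stdGaussianPi i).variance_eq,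
      variance_id_gaussianReal, NNReal.coe_one]
  · exact (iIndepFun_stdGaussianPi.indepFun hij).covariance_eq_zero (memLp_two i) (memLp_two j)

theorem covariance_dotProduct_stdGaussianPi (u u' : ι → ℝ) :
    cov[fun v ↦ v ⬝ᵥ u, fun v ↦ v ⬝ᵥ u'; stdGaussianPi ι] = u ⬝ᵥ u' := by
  classical
  have memLp_two (c : ℝ) (i : ι) : MemLp (fun v ↦ v i * c) 2 (stdGaussianPi ι) :=
    (hasGaussianLaw_stdGaussianPi.eval i).memLp_two.mul_const c
  simp only [dotProduct]
  rw [covariance_fun_sum_fun_sum (fun i ↦ memLp_two _ i) (fun i ↦ memLp_two _ i)]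
  simp [covariance_mul_const_left, covariance_mul_const_right, covariance_eval_stdGaussianPi]

theorem integral_prod_dotProduct_stdGaussianPi (u : Fin 4 → ι → ℝ) :
    ∫ v, ∏ a, v ⬝ᵥ u a ∂stdGaussianPi ι = pairingSum fun a b ↦ u a ⬝ᵥ u b := by
  have gaussian : HasGaussianLaw (fun v a ↦ v ⬝ᵥ u a) (stdGaussianPi ι) :=
    hasGaussianLaw_stdGaussianPi.map_fun (Matrix.of u)ᵀ.vecMulLinear.toContinuousLinearMap
  have centered (a : Fin 4) : ∫ v, v ⬝ᵥ u a ∂stdGaussianPi ι = 0 := by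
    simp only [dotProduct]
    rw [integral_finsetSum _ fun i _ ↦ (hasGaussianLaw_stdGaussianPi.eval i).integrable.mul_const _]
    simp [integral_mul_const, (hasLaw_eval_stdGaussianPi _).integral_eq]
  simp_rw [integral_prod_eq_pairingSum_covariance gaussian centered,
    covariance_dotProduct_stdGaussianPi]

/-- The linear layer `u ↦ W u` with weight matrix `W k i = w (k, i)`. The weights are uncurried so
that they form a block of the parameter vector of the network. -/
def layer (w : κ × ι → ℝ) (u : ι → ℝ) (k : κ) : ℝ := ∑ i, w (k, i) * u i

theorem hasFiniteMoments_layer_stdGaussianPi (u : ι → ℝ) (k : κ) :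
    HasFiniteMoments (fun w ↦ layer w u k) (stdGaussianPi (κ × ι)) :=
  .sum _ fun i _ ↦ (hasFiniteMoments_eval_stdGaussianPi (k, i)).mul_const (u i)

theorem integral_prod_layer_stdGaussianPi [DecidableEq κ] (u : Fin 4 → ι → ℝ) (p : Fin 4 → κ) :
    ∫ w, ∏ a, layer w (u a) (p a) ∂stdGaussianPi (κ × ι) =
      pairingSum fun a b ↦ if p a = p b then u a ⬝ᵥ u b else 0 := by
  let row (a : Fin 4) (q : κ × ι) : ℝ := if q.1 = p a then u a q.2 else 0
  have layer_eq (w : κ × ι → ℝ) (a : Fin 4) : layer w (u a) (p a) = w ⬝ᵥ row a := by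
    simp [layer, row, dotProduct, Fintype.sum_prod_type]
  have row_dotProduct (a b : Fin 4) :
      row a ⬝ᵥ row b = if p a = p b then u a ⬝ᵥ u b else 0 := by
    simp only [row, dotProduct, Fintype.sum_prod_type]
    rw [Finset.sum_comm]
    split_ifs with h
    · simp [h]
    · simp [Ne.symm h]
  simp_rw [layer_eq, integral_prod_dotProduct_stdGaussianPi, row_dotProduct]

theorem integral_dotProduct_layer_mul_dotProduct_layer (u₀ u₁ u₂ u₃ : ι → ℝ) :
    ∫ w, (layer w u₀ ⬝ᵥ layer w u₁) * (layer w u₂ ⬝ᵥ layer w u₃) ∂stdGaussianPi (κ × ι) =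
      Fintype.card κ ^ 2 * ((u₀ ⬝ᵥ u₁) * (u₂ ⬝ᵥ u₃)) +
        Fintype.card κ * ((u₀ ⬝ᵥ u₂) * (u₁ ⬝ᵥ u₃) + (u₀ ⬝ᵥ u₃) * (u₁ ⬝ᵥ u₂)) := by
  classical
  let u := ![u₀, u₁, u₂, u₃]
  have expand (w : κ × ι → ℝ) : (layer w u₀ ⬝ᵥ layer w u₁) * (layer w u₂ ⬝ᵥ layer w u₃) =
      ∑ k, ∑ l, ∏ a, layer w (u a) (![k, k, l, l] a) := by
    simp [u, dotProduct, Finset.sum_mul_sum, Fin.prod_univ_four, mul_assoc]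
  have moments (k l : κ) : HasFiniteMoments
      (fun w ↦ ∏ a, layer w (u a) (![k, k, l, l] a)) (stdGaussianPi (κ × ι)) :=
    .prod _ fun a _ ↦ hasFiniteMoments_layer_stdGaussianPi _ _
  have pairingSum_eq (k l : κ) :
      pairingSum (fun a b ↦ if ![k, k, l, l] a = ![k, k, l, l] b then u a ⬝ᵥ u b else 0) =
        (u₀ ⬝ᵥ u₁) * (u₂ ⬝ᵥ u₃) +
          if k = l then (u₀ ⬝ᵥ u₂) * (u₁ ⬝ᵥ u₃) + (u₀ ⬝ᵥ u₃) * (u₁ ⬝ᵥ u₂) else 0 := by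
    by_cases h : k = l <;> simp [pairingSum, u, h, add_assoc]
  simp_rw [expand]
  rw [integral_finsetSum _ fun k _ ↦ (HasFiniteMoments.sum _ fun l _ ↦ moments k l).integrable]
  simp_rw [integral_finsetSum _ fun l _ ↦ (moments _ l).integrable,
    integral_prod_layer_stdGaussianPi, pairingSum_eq]
  simp [Finset.sum_add_distrib, ← mul_add, sq, mul_assoc]

theorem integral_pairingSum_layer (u : Fin 4 → ι → ℝ) :
    ∫ w, pairingSum (fun a b ↦ layer w (u a) ⬝ᵥ layer w (u b)) ∂stdGaussianPi (κ × ι) =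
      (Fintype.card κ ^ 2 + 2 * Fintype.card κ) * pairingSum fun a b ↦ u a ⬝ᵥ u b := by
  have moments (a b : Fin 4) :
      HasFiniteMoments (fun w ↦ layer w (u a) ⬝ᵥ layer w (u b)) (stdGaussianPi (κ × ι)) :=
    .dotProduct (hasFiniteMoments_layer_stdGaussianPi _) (hasFiniteMoments_layer_stdGaussianPi _)
  have moments_mul (a b c d : Fin 4) := (moments a b).mul (moments c d)
  simp only [pairingSum]
  rw [integral_add ((moments_mul 0 1 2 3).add (moments_mul 0 2 1 3)).integrable
      (moments_mul 0 3 1 2).integrable,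
    integral_add (moments_mul 0 1 2 3).integrable (moments_mul 0 2 1 3).integrable]
  simp only [integral_dotProduct_layer_mul_dotProduct_layer]
  rw [dotProduct_comm (u 2) (u 1), dotProduct_comm (u 3) (u 1), dotProduct_comm (u 3) (u 2)]
  ring

end StdGaussianPi

/-! ### Resampling a block of coordinates -/

section Extend

variable {ι κ α : Type*} [MeasurableSpace α] {e : ι → κ}

theorem measurable_extend (he : e.Injective) :
    Measurable fun q : (κ → α) × (ι → α) ↦ Function.extend e q.2 q.1 := by
  refine measurable_pi_lambda _ fun k ↦ ?_
  by_cases hk : ∃ i, e i = k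
  · obtain ⟨i, rfl⟩ := hk
    simp only [he.extend_apply]
    fun_prop
  · simp only [Function.extend_apply' _ _ _ hk]
    fun_prop

variable [Fintype ι] [Fintype κ] {ν : κ → Measure α} [∀ k, IsProbabilityMeasure (ν k)]

theorem measurePreserving_extend (he : e.Injective) :
    MeasurePreserving (fun q : (κ → α) × (ι → α) ↦ Function.extend e q.2 q.1)
      ((Measure.pi ν).prod (Measure.pi fun i ↦ ν (e i))) (Measure.pi ν) := by
  classical
  refine ⟨measurable_extend he, (Measure.pi_eq fun s hs ↦ ?_).symm⟩
  let t (k : κ) : Set α := if ∃ i, e i = k then Set.univ else s k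
  have preimage_eq : (fun q : (κ → α) × (ι → α) ↦ Function.extend e q.2 q.1) ⁻¹'
      Set.univ.pi s = Set.univ.pi t ×ˢ Set.univ.pi fun i ↦ s (e i) := by
    ext q
    simp only [Set.mem_preimage, Set.mem_prod, Set.mem_univ_pi]
    refine ⟨fun h ↦ ⟨fun k ↦ ?_, fun i ↦ he.extend_apply q.2 q.1 i ▸ h (e i)⟩, fun h k ↦ ?_⟩
    · by_cases hk : ∃ i, e i = k
      · simp only [t, if_pos hk, Set.mem_univ]
      · simpa only [t, if_neg hk, Function.extend_apply' _ _ _ hk] using h k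
    · by_cases hk : ∃ i, e i = k
      · obtain ⟨i, rfl⟩ := hk
        simpa only [he.extend_apply] using h.2 i
      · simpa only [t, if_neg hk, Function.extend_apply' _ _ _ hk] using h.1 k
  have prod_eq : ∏ i, ν (e i) (s (e i)) = ∏ k, if ∃ i, e i = k then ν k (s k) else 1 :=
    Fintype.prod_of_injective e he _ _ (fun k hk ↦ if_neg hk) fun i ↦ by simp
  rw [Measure.map_apply (measurable_extend he) (.univ_pi hs), preimage_eq, Measure.prod_prod,
    Measure.pi_pi, Measure.pi_pi, prod_eq, ← Finset.prod_mul_distrib]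
  refine Finset.prod_congr rfl fun k _ ↦ ?_
  by_cases hk : ∃ i, e i = k
  · simp only [t, if_pos hk, measure_univ, one_mul]
  · simp only [t, if_neg hk, mul_one]

theorem integral_integral_extend {E : Type*} [NormedAddCommGroup E] [NormedSpace ℝ E]
    (he : e.Injective) {F : (κ → α) → E} (hF : Integrable F (Measure.pi ν)) :
    ∫ θ, ∫ w, F (Function.extend e w θ) ∂(Measure.pi fun i ↦ ν (e i)) ∂Measure.pi ν =
      ∫ θ, F θ ∂Measure.pi ν := by
  have extend := measurePreserving_extend (ν := ν) he
  rw [← extend.hasLaw.integral_comp hF.aestronglyMeasurable]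
  exact (integral_prod _ (extend.integrable_comp_of_integrable hF)).symm

end Extend

/-! ### The network -/

section Network

variable {d0 d n : ℕ}

theorem hidden_zero (θ : Param d0 d n → ℝ) (x : Fin d0 → ℝ) :
    hidden d0 d n θ x 0 = layer (fun q ↦ θ (.inr (.inl q))) x := rfl

theorem hidden_succ (θ : Param d0 d n → ℝ) (x : Fin d0 → ℝ) (ℓ : Fin (d - 1)) :
    hidden d0 d n θ x (ℓ + 1) =
      layer (fun q ↦ θ (.inr (.inr (ℓ, q)))) (hidden d0 d n θ x ℓ) := by
  ext i
  simp [hidden, layer]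

theorem hidden_congr {θ θ' : Param d0 d n → ℝ} (x : Fin d0 → ℝ) {ℓ : ℕ}
    (h₀ : ∀ q, θ (.inr (.inl q)) = θ' (.inr (.inl q)))
    (h : ∀ m : Fin (d - 1), ∀ q, m < ℓ → θ (.inr (.inr (m, q))) = θ' (.inr (.inr (m, q)))) :
    hidden d0 d n θ x ℓ = hidden d0 d n θ' x ℓ := by
  induction ℓ with
  | zero => simp only [hidden_zero, h₀]
  | succ ℓ ih =>
    have ih := ih fun m q hm ↦ h m q (hm.trans ℓ.lt_succ_self)
    ext i
    simp only [hidden, ih]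
    refine Finset.sum_congr rfl fun j _ ↦ ?_
    split_ifs with hℓ
    · rw [h ⟨ℓ, hℓ⟩ (i, j) ℓ.lt_succ_self]
    · rfl

theorem hasFiniteMoments_hidden (x : Fin d0 → ℝ) (ℓ : ℕ) (i : Fin n) :
    HasFiniteMoments (fun θ ↦ hidden d0 d n θ x ℓ i) (gaussParam d0 d n) := by
  induction ℓ generalizing i with
  | zero => exact .sum _ fun j _ ↦ (hasFiniteMoments_eval_stdGaussianPi _).mul_const (x j)
  | succ ℓ ih =>
    refine .sum _ fun j _ ↦ ?_
    split_ifs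
    · exact (hasFiniteMoments_eval_stdGaussianPi _).mul (ih j)
    · exact (ih j).const_mul 0

theorem integrable_pairingSum_hidden (x : Fin 4 → Fin d0 → ℝ) (ℓ : ℕ) :
    Integrable (fun θ ↦ pairingSum fun a b ↦
      hidden d0 d n θ (x a) ℓ ⬝ᵥ hidden d0 d n θ (x b) ℓ) (gaussParam d0 d n) :=
  (HasFiniteMoments.pairingSum fun a b ↦ .dotProduct (hasFiniteMoments_hidden (x a) ℓ)
    (hasFiniteMoments_hidden (x b) ℓ)).integrable

theorem integral_pairingSum_hidden_zero (x : Fin 4 → Fin d0 → ℝ) :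
    ∫ θ, pairingSum (fun a b ↦ hidden d0 d n θ (x a) 0 ⬝ᵥ hidden d0 d n θ (x b) 0)
        ∂gaussParam d0 d n =
      ((n : ℝ) ^ 2 + 2 * n) * pairingSum fun a b ↦ x a ⬝ᵥ x b := by
  let e : Fin n × Fin d0 → Param d0 d n := .inr ∘ .inl
  have he : e.Injective := Sum.inr_injective.comp Sum.inl_injective
  have hidden_extend (θ : Param d0 d n → ℝ) (w y) :
      hidden d0 d n (Function.extend e w θ) y 0 = layer w y :=
    congrArg (layer · y) (funext fun q ↦ he.extend_apply w θ q)
  rw [gaussParam, ← integral_integral_extend he (integrable_pairingSum_hidden x 0)]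
  simp [hidden_extend, integral_pairingSum_layer]

theorem integral_pairingSum_hidden_succ (x : Fin 4 → Fin d0 → ℝ) (ℓ : Fin (d - 1)) :
    ∫ θ, pairingSum (fun a b ↦
        hidden d0 d n θ (x a) (ℓ + 1) ⬝ᵥ hidden d0 d n θ (x b) (ℓ + 1)) ∂gaussParam d0 d n =
      ((n : ℝ) ^ 2 + 2 * n) *
        ∫ θ, pairingSum (fun a b ↦ hidden d0 d n θ (x a) ℓ ⬝ᵥ hidden d0 d n θ (x b) ℓ)
          ∂gaussParam d0 d n := by
  let e : Fin n × Fin n → Param d0 d n := fun q ↦ .inr (.inr (ℓ, q))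
  have he : e.Injective :=
    Sum.inr_injective.comp (Sum.inr_injective.comp (Prod.mk_right_injective ℓ))
  have hidden_extend_self (θ : Param d0 d n → ℝ) (w y) :
      hidden d0 d n (Function.extend e w θ) y ℓ = hidden d0 d n θ y ℓ :=
    hidden_congr y (fun q ↦ Function.extend_apply' _ _ _ (by simp [e]))
      fun m q hm ↦ Function.extend_apply' _ _ _ (by simp [e, Fin.ne_of_gt (Fin.lt_def.2 hm)])
  have hidden_extend (θ : Param d0 d n → ℝ) (w y) :
      hidden d0 d n (Function.extend e w θ) y (ℓ + 1) = layer w (hidden d0 d n θ y ℓ) := by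
    rw [hidden_succ, hidden_extend_self]
    exact congrArg (layer · _) (funext fun q ↦ he.extend_apply w θ q)
  rw [gaussParam, ← integral_integral_extend he (integrable_pairingSum_hidden x _)]
  simp [hidden_extend, integral_pairingSum_layer, integral_const_mul]

theorem integral_pairingSum_hidden (x : Fin 4 → Fin d0 → ℝ) {ℓ : ℕ} (hℓ : ℓ ≤ d - 1) :
    ∫ θ, pairingSum (fun a b ↦ hidden d0 d n θ (x a) ℓ ⬝ᵥ hidden d0 d n θ (x b) ℓ)
        ∂gaussParam d0 d n =
      ((n : ℝ) ^ 2 + 2 * n) ^ (ℓ + 1) * pairingSum fun a b ↦ x a ⬝ᵥ x b := by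
  induction ℓ with
  | zero => rw [integral_pairingSum_hidden_zero, zero_add, pow_one]
  | succ ℓ ih =>
    rw [integral_pairingSum_hidden_succ x ⟨ℓ, hℓ⟩, ih (Nat.le_of_succ_le hℓ), pow_succ' _ (ℓ + 1),
      mul_assoc]

theorem integral_prod_readout (x : Fin 4 → Fin d0 → ℝ) :
    ∫ θ, ∏ a, ∑ i, θ (.inl i) * hidden d0 d n θ (x a) (d - 1) i ∂gaussParam d0 d n =
      ∫ θ, pairingSum (fun a b ↦
        hidden d0 d n θ (x a) (d - 1) ⬝ᵥ hidden d0 d n θ (x b) (d - 1)) ∂gaussParam d0 d n := by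
  have hidden_extend (θ : Param d0 d n → ℝ) (v y) :
      hidden d0 d n (Function.extend Sum.inl v θ) y (d - 1) = hidden d0 d n θ y (d - 1) :=
    hidden_congr y (fun q ↦ Function.extend_apply' _ _ _ (by simp))
      fun m q _ ↦ Function.extend_apply' _ _ _ (by simp)
  have integrable : Integrable (fun θ : Param d0 d n → ℝ ↦
      ∏ a, ∑ i, θ (.inl i) * hidden d0 d n θ (x a) (d - 1) i) (gaussParam d0 d n) :=
    (HasFiniteMoments.prod (μ := stdGaussianPi _) _ fun a _ ↦ .dotProduct
      (fun _ ↦ hasFiniteMoments_eval_stdGaussianPi _)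
      (hasFiniteMoments_hidden (x a) (d - 1))).integrable
  rw [gaussParam, ← integral_integral_extend Sum.inl_injective integrable]
  refine integral_congr_ae (.of_forall fun θ ↦ ?_)
  simp only [hidden_extend, Sum.inl_injective.extend_apply]
  exact integral_prod_dotProduct_stdGaussianPi _

theorem integral_prod_net (hd : 1 ≤ d) (hn : 1 ≤ n) (x : Fin 4 → Fin d0 → ℝ) :
    ∫ θ, ∏ a, net d0 d n θ (x a) ∂gaussParam d0 d n =
      (1 + 2 / n) ^ d * pairingSum fun a b ↦ Kker d0 (x a) (x b) := by
  have normalization : (√((n : ℝ) ^ d * d0))⁻¹ ^ 4 =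
      (((n : ℝ) ^ 2) ^ d)⁻¹ * (d0 : ℝ)⁻¹ ^ 2 := by
    rw [inv_pow, pow_mul _ 2 2, Real.sq_sqrt (by positivity), mul_pow, mul_inv, inv_pow,
      pow_right_comm]
  have factor : ((n : ℝ) ^ 2 + 2 * n) ^ d = ((n : ℝ) ^ 2) ^ d * (1 + 2 / n) ^ d := by
    rw [← mul_pow]
    field_simp
  have rescale : pairingSum (fun a b ↦ Kker d0 (x a) (x b)) =
      (d0 : ℝ)⁻¹ ^ 2 * pairingSum fun a b ↦ x a ⬝ᵥ x b := by
    simp only [pairingSum, Kker, dotProduct]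
    ring
  simp only [net, Finset.prod_mul_distrib, Finset.prod_const, Finset.card_univ, Fintype.card_fin,
    integral_const_mul, integral_prod_readout, integral_pairingSum_hidden x le_rfl,
    Nat.sub_add_cancel hd, normalization, factor, rescale]
  field_simp

end Network

theorem one_add_two_mul_pow_le (d : ℕ) {t : ℝ} (h₀ : 0 ≤ t) (h₁ : t ≤ 1) :
    (1 + 2 * t) ^ d ≤ 1 + (3 ^ d - 1) * t := by
  have convex := (convexOn_pow d).2 (x := (1 : ℝ)) (y := 3) (by simp) (by simp) (sub_nonneg.2 h₁) h₀
    (by ring)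
  calc
    (1 + 2 * t) ^ d = ((1 - t) * 1 + t * 3) ^ d := by ring
    _ ≤ (1 - t) * 1 ^ d + t * 3 ^ d := convex
    _ = 1 + (3 ^ d - 1) * t := by ring

/-- the connected four-point function of a deep linear fully connected
network is `O(1/n)`. -/
theorem deep_linear_fc_four_point (d0 d : ℕ) (hd0 : 0 < d0) (hd : 1 ≤ d)
    (x₁ x₂ x₃ x₄ : Fin d0 → ℝ) :
    ∃ K : ℝ, ∀ n : ℕ, 1 ≤ n →
      |(∫ θ, net d0 d n θ x₁ * net d0 d n θ x₂ * net d0 d n θ x₃ * net d0 d n θ x₄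
            ∂(gaussParam d0 d n))
          - (Kker d0 x₁ x₂ * Kker d0 x₃ x₄ + Kker d0 x₁ x₃ * Kker d0 x₂ x₄
              + Kker d0 x₁ x₄ * Kker d0 x₂ x₃)| ≤ K / (n : ℝ) := by
  let S := pairingSum fun a b ↦ Kker d0 (![x₁, x₂, x₃, x₄] a) (![x₁, x₂, x₃, x₄] b)
  refine ⟨(3 ^ d - 1) * |S|, fun n hn ↦ ?_⟩
  have four_point : ∫ θ, net d0 d n θ x₁ * net d0 d n θ x₂ * net d0 d n θ x₃ * net d0 d n θ x₄
      ∂gaussParam d0 d n = (1 + 2 / n) ^ d * S := by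
    rw [← integral_prod_net hd hn]
    simp only [Fin.prod_univ_four, Matrix.cons_val]
  have one_le : (1 : ℝ) ≤ (1 + 2 / n) ^ d := one_le_pow₀ (le_add_of_nonneg_right (by positivity))
  have le_linear : (1 + 2 / n : ℝ) ^ d ≤ 1 + (3 ^ d - 1) / n := by
    simpa only [div_eq_mul_inv] using
      one_add_two_mul_pow_le d (by positivity) (Nat.cast_inv_le_one n)
  calc
    _ = |(1 + 2 / n) ^ d * S - S| := by rw [four_point]; rfl
    _ = ((1 + 2 / n) ^ d - 1) * |S| := by
      rw [← sub_one_mul, abs_mul, abs_of_nonneg (sub_nonneg.2 one_le)]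
    _ ≤ (3 ^ d - 1) / n * |S| := by gcongr; linarith
    _ = (3 ^ d - 1) * |S| / n := by ring

end DeepLinearFC
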